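/- arXiv:1602.00351 — 3 statements merged into one kernel-verified Lean document; each statement's English description precedes it below -/
import Mathlib

section
/- For any vectors g_1, …, g_T ∈ ℝ^d, with s_{t,i} = ‖g_{1:t,i}‖₂ = sqrt(Σ_{τ=1}^t g_{τ,i}²) and the convention that a summand with s_{t,i} = 0 (equivalently g_{t,i} = 0) is taken to be 0, one has Σ_{t=1}^T ⟨g_t, diag(s_t)^{-1} g_t⟩ = Σ_{t=1}^T Σ_{i=1}^d g_{t,i}² / s_{t,i} ≤ 2 Σ_{i=1}^d ‖g_{1:T,i}‖₂. -/
open Finset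

theorem adaGrad_step (A x : ℝ) (hA : 0 ≤ A) :
    2 * Real.sqrt A + x ^ 2 / Real.sqrt (A + x ^ 2) ≤ 2 * Real.sqrt (A + x ^ 2) := by
  have hx := sq_nonneg x
  have ha := Real.sq_sqrt hA
  have hb := Real.sq_sqrt (add_nonneg hA hx)
  have hab : Real.sqrt A ≤ Real.sqrt (A + x ^ 2) := Real.sqrt_le_sqrt (by linarith)
  rcases (Real.sqrt_nonneg (A + x ^ 2)).eq_or_lt with h0 | h0
  · rw [← h0] at hab ⊢
    simp only [div_zero]
    linarith
  · have : x ^ 2 / Real.sqrt (A + x ^ 2) ≤ 2 * Real.sqrt (A + x ^ 2) - 2 * Real.sqrt A := by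
      rw [div_le_iff₀ h0]
      nlinarith [sq_nonneg (Real.sqrt A - Real.sqrt (A + x ^ 2))]
    linarith

theorem adaGrad_scalar (T : ℕ) (g : Fin T → ℝ) :
    ∑ t : Fin T, (g t) ^ 2 /
        Real.sqrt (∑ τ ∈ Finset.univ.filter (fun τ : Fin T => τ ≤ t), (g τ) ^ 2)
      ≤ 2 * Real.sqrt (∑ t : Fin T, (g t) ^ 2) := by
  simp only [Finset.sum_filter]
  induction T with
  | zero => simp
  | succ n ih =>
    have h := ih (fun t => g t.castSucc)
    have hs := adaGrad_step (∑ t : Fin n, (g t.castSucc) ^ 2) (g (Fin.last n))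
      (Finset.sum_nonneg fun _ _ => sq_nonneg _)
    have hn : ∀ t : Fin n, ¬ (Fin.last n ≤ t.castSucc) := fun t =>
      not_le.mpr (Fin.castSucc_lt_last t)
    simp only [Fin.sum_univ_castSucc, Fin.castSucc_le_castSucc_iff, hn, if_false, add_zero,
      Fin.le_last, if_true]
    linarith

/-- **Lemma 1 (AdaOAM)**: for vectors `g 1, …, g T ∈ ℝ^d`, with
`s t i = ‖g_{1:t,i}‖₂ = sqrt (∑_{τ ≤ t} (g τ i)^2)` (and the summand taken to be `0`
when `s t i = 0`, which here is automatic since then `g t i = 0` and `0 / 0 = 0`),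
`∑_t ⟨g_t, diag (s_t)⁻¹ g_t⟩ = ∑_t ∑_i (g t i)^2 / s t i ≤ 2 ∑_i ‖g_{1:T,i}‖₂`. -/
theorem adaGrad_diag_inner_sum_le (T d : ℕ) (g : Fin T → Fin d → ℝ) :
    ∑ t : Fin T, ∑ i : Fin d,
        (g t i) ^ 2 /
          Real.sqrt (∑ τ ∈ Finset.univ.filter (fun τ : Fin T => τ ≤ t), (g τ i) ^ 2)
      ≤ 2 * ∑ i : Fin d, Real.sqrt (∑ t : Fin T, (g t i) ^ 2) := by
  rw [Finset.sum_comm, Finset.mul_sum]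
  exact Finset.sum_le_sum fun i _ => adaGrad_scalar T (fun t => g t i)
end

section
/- Let χ ⊆ ℝ^d be a nonempty closed convex set with sup_{w,u ∈ χ} ‖w − u‖_∞ ≤ D_∞, and let f_1, …, f_T : ℝ^d → ℝ be convex differentiable functions. Let w_1 ∈ χ, g_t = ∇f_t(w_t), s_{t,i} = ‖g_{1:t,i}‖₂, and assume s_{t,i} > 0 for all t, i. Define H_t = diag(s_{t,1}, …, s_{t,d}) and generate the iterates by the adaptive mirror-descent update w_{t+1} = argmin_{w ∈ χ} { η⟨g_t, w⟩ + (1/2)⟨w − w_t, H_t (w − w_t)⟩ } with learning rate η = D_∞/√2. Then for every w* ∈ χ, Σ_{t=1}^T [ f_t(w_t) − f_t(w*) ] ≤ √2 · D_∞ · Σ_{i=1}^d ‖g_{1:T,i}‖₂. -/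
open Finset
open scoped RealInnerProductSpace


lemma aux_grad {d : ℕ} (f : EuclideanSpace ℝ (Fin d) → ℝ) (hc : ConvexOn ℝ Set.univ f)
    (hd : Differentiable ℝ f) (w u : EuclideanSpace ℝ (Fin d)) :
    f w - f u ≤ ∑ i, gradient f w i * (w i - u i) := by
  have hgr : HasGradientAt f (gradient f w) w := (hd w).hasGradientAt
  have hF : HasFDerivAt f (InnerProductSpace.toDual ℝ _ (gradient f w)) w := hgr
  generalize gradient f w = G at *
  have hl : HasDerivAt (fun x : ℝ => w + x • (u - w)) (u - w) 0 := by
    simpa using ((hasDerivAt_id (0 : ℝ)).smul_const (u - w)).const_add w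
  have hF' : HasFDerivAt f (InnerProductSpace.toDual ℝ _ G)
      ((fun x : ℝ => w + x • (u - w)) 0) := by simpa using hF
  have hcomp := hF'.comp_hasDerivAt (0 : ℝ) hl
  have hcv : ConvexOn ℝ Set.univ (f ∘ fun x : ℝ => w + x • (u - w)) := by
    have := hc.comp_affineMap (AffineMap.lineMap w u)
    rw [Set.preimage_univ] at this
    have e : (fun x : ℝ => w + x • (u - w)) = AffineMap.lineMap w u := by
      funext x
      simp [AffineMap.lineMap_apply, add_comm]
    rw [e]
    exact this
  have h := hcv.le_slope_of_hasDerivAt (Set.mem_univ 0) (Set.mem_univ 1) one_pos hcomp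
  rw [InnerProductSpace.toDual_apply_apply] at h
  simp only [PiLp.inner_apply] at h
  simp [slope] at h
  have e : ∑ i, G i * (w i - u i) = -∑ i, (u i - w i) * G i := by
    rw [← Finset.sum_neg_distrib]
    exact Finset.sum_congr rfl fun i _ => by ring
  rw [e]
  linarith

lemma aux_quad (a b : ℝ) (hb : 0 ≤ b) (h : ∀ θ : ℝ, 0 < θ → θ ≤ 1 → 0 ≤ θ * a + θ ^ 2 * b) :
    0 ≤ a := by
  by_contra! ha
  have hp : 0 < b + -a := by linarith
  have h1 := h (-a / (2 * (b + -a))) (by apply div_pos <;> linarith)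
    (by rw [div_le_one (by linarith)]; linarith)
  set θ := -a / (2 * (b + -a)) with hθ
  have hθp : 0 < θ := by apply div_pos <;> linarith
  have h2 : θ * (2 * (b + -a)) = -a := by rw [hθ]; field_simp
  have h3 : 0 ≤ a + θ * b := by
    by_contra! hh
    nlinarith
  nlinarith

lemma aux_opt {d : ℕ} (χ : Set (EuclideanSpace ℝ (Fin d))) (hconv : Convex ℝ χ)
    (s : Fin d → ℝ) (hs : ∀ i, 0 < s i) (η : ℝ) (g w v u : EuclideanSpace ℝ (Fin d))
    (hv : v ∈ χ) (hu : u ∈ χ)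
    (h : ∀ u ∈ χ, η * ⟪g, v⟫ + (1 / 2) * ∑ i : Fin d, s i * (v i - w i) ^ 2
          ≤ η * ⟪g, u⟫ + (1 / 2) * ∑ i : Fin d, s i * (u i - w i) ^ 2) :
    0 ≤ ∑ i, (η * (g i * (u i - v i)) + s i * ((v i - w i) * (u i - v i))) := by
  apply aux_quad _ ((1 / 2) * ∑ i, s i * (u i - v i) ^ 2)
  · have : 0 ≤ ∑ i, s i * (u i - v i) ^ 2 :=
      Finset.sum_nonneg fun i _ => mul_nonneg (hs i).le (sq_nonneg _)
    linarith
  · intro θ h0 h1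
    have hm : v + θ • (u - v) ∈ χ := hconv.add_smul_sub_mem hv hu ⟨h0.le, h1⟩
    have h2 := h _ hm
    simp only [PiLp.inner_apply, RCLike.inner_apply, conj_trivial, PiLp.add_apply,
      PiLp.smul_apply, PiLp.sub_apply, smul_eq_mul, Finset.mul_sum, ← Finset.sum_add_distrib] at h2 ⊢
    rw [← sub_nonneg, ← Finset.sum_sub_distrib] at h2
    convert h2 using 1
    exact Finset.sum_congr rfl fun i _ => by ring

lemma aux_step {d : ℕ} (χ : Set (EuclideanSpace ℝ (Fin d))) (hconv : Convex ℝ χ)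
    (s : Fin d → ℝ) (hs : ∀ i, 0 < s i) (η : ℝ) (g w v u : EuclideanSpace ℝ (Fin d))
    (hv : v ∈ χ) (hu : u ∈ χ)
    (h : ∀ u ∈ χ, η * ⟪g, v⟫ + (1 / 2) * ∑ i : Fin d, s i * (v i - w i) ^ 2
          ≤ η * ⟪g, u⟫ + (1 / 2) * ∑ i : Fin d, s i * (u i - w i) ^ 2) :
    η * ∑ i, g i * (w i - u i) ≤
      ∑ i, (s i / 2 * ((u i - w i) ^ 2 - (u i - v i) ^ 2) + η ^ 2 * (g i ^ 2 / (2 * s i))) := by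
  have h1 := aux_opt χ hconv s hs η g w v u hv hu h
  refine le_trans (le_add_of_nonneg_right h1) ?_
  rw [Finset.mul_sum, ← Finset.sum_add_distrib]
  refine Finset.sum_le_sum fun i _ => ?_
  have hsi := hs i
  have key : s i / 2 * ((u i - w i) ^ 2 - (u i - v i) ^ 2) + η ^ 2 * (g i ^ 2 / (2 * s i)) -
      (η * (g i * (w i - u i)) + (η * (g i * (u i - v i)) + s i * ((v i - w i) * (u i - v i))))
      = (η * g i - s i * (w i - v i)) ^ 2 / (2 * s i) := by
    field_simp
    ring
  have : 0 ≤ (η * g i - s i * (w i - v i)) ^ 2 / (2 * s i) := by positivity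
  linarith

lemma aux_tel (T : ℕ) (g x : ℕ → ℝ) (D η u : ℝ) (hD : ∀ n ≤ T, |u - x n| ≤ D)
    (hpos : ∀ n < T, 0 < Real.sqrt (∑ τ ∈ Finset.range (n + 1), g τ ^ 2)) (n : ℕ) (hn : n ≤ T) :
    ∑ t ∈ Finset.range n,
      (Real.sqrt (∑ τ ∈ Finset.range (t + 1), g τ ^ 2) / 2 * ((u - x t) ^ 2 - (u - x (t + 1)) ^ 2)
        + η ^ 2 * (g t ^ 2 / (2 * Real.sqrt (∑ τ ∈ Finset.range (t + 1), g τ ^ 2)))) ≤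
    Real.sqrt (∑ τ ∈ Finset.range n, g τ ^ 2) * (D ^ 2 / 2 + η ^ 2 - (u - x n) ^ 2 / 2) := by
  induction n with
  | zero => simp
  | succ n ih =>
    have ih := ih (by omega)
    rw [Finset.sum_range_succ]
    have hS := Real.sq_sqrt (Finset.sum_nonneg (s := Finset.range n) fun τ _ => sq_nonneg (g τ))
    have hS' := Real.sq_sqrt (Finset.sum_nonneg (s := Finset.range (n+1)) fun τ _ => sq_nonneg (g τ))
    have hp := hpos n (by omega)
    have h0 := Real.sqrt_nonneg (∑ τ ∈ Finset.range n, g τ ^ 2)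
    have hle : Real.sqrt (∑ τ ∈ Finset.range n, g τ ^ 2) ≤
        Real.sqrt (∑ τ ∈ Finset.range (n + 1), g τ ^ 2) := by
      apply Real.sqrt_le_sqrt
      rw [Finset.sum_range_succ]
      linarith [sq_nonneg (g n)]
    have hrec := Finset.sum_range_succ (fun τ => g τ ^ 2) n
    have hsq : (u - x n) ^ 2 ≤ D ^ 2 := sq_le_sq' (neg_le_of_abs_le (hD n (by omega)))
      (le_of_abs_le (hD n (by omega)))
    set S := Real.sqrt (∑ τ ∈ Finset.range n, g τ ^ 2)
    set S' := Real.sqrt (∑ τ ∈ Finset.range (n + 1), g τ ^ 2)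
    have hg : g n ^ 2 / (2 * S') ≤ S' - S := by
      rw [div_le_iff₀ (by positivity)]
      nlinarith
    have h1 := mul_le_mul_of_nonneg_left hg (sq_nonneg η)
    have h2 := mul_le_mul_of_nonneg_left hsq (sub_nonneg.2 hle)
    linarith

/-- **Lemma 2 (AdaOAM)**: regret bound for adaptive diagonal (composite) mirror descent
with zero regularizer.  `χ ⊆ ℝ^d` is a nonempty closed convex set whose `ℓ∞`-diameter is
at most `Dinf`; the `f t` are convex differentiable; `g t = ∇ f t (w t)`;
`s t i = ‖g_{1:t,i}‖₂ > 0`; `H t = diag (s t)`; the iterates are generated by the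
adaptive mirror-descent update with learning rate `η = Dinf / √2`.  Then for every
`w* ∈ χ`, `∑_{t<T} (f t (w t) - f t w*) ≤ √2 · Dinf · ∑_i ‖g_{1:T,i}‖₂`. -/
theorem adaGrad_mirror_descent_regret (d T : ℕ)
    (χ : Set (EuclideanSpace ℝ (Fin d)))
    (hne : χ.Nonempty) (hcl : IsClosed χ) (hconv : Convex ℝ χ)
    (Dinf : ℝ)
    (hD : ∀ w ∈ χ, ∀ u ∈ χ, ∀ i : Fin d, |w i - u i| ≤ Dinf)
    (f : ℕ → EuclideanSpace ℝ (Fin d) → ℝ)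
    (hfconv : ∀ t, ConvexOn ℝ Set.univ (f t))
    (hfdiff : ∀ t, Differentiable ℝ (f t))
    (w : ℕ → EuclideanSpace ℝ (Fin d))
    (hw1 : w 0 ∈ χ)
    (g : ℕ → EuclideanSpace ℝ (Fin d))
    (hg : ∀ t, g t = gradient (f t) (w t))
    (s : ℕ → Fin d → ℝ)
    (hs : ∀ t i, s t i = Real.sqrt (∑ τ ∈ Finset.range (t + 1), (g τ i) ^ 2))
    (hspos : ∀ t ∈ Finset.range T, ∀ i : Fin d, 0 < s t i)
    (η : ℝ) (hη : η = Dinf / Real.sqrt 2)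
    (hupdate : ∀ t ∈ Finset.range T,
      w (t + 1) ∈ χ ∧ ∀ u ∈ χ,
        η * ⟪g t, w (t + 1)⟫ + (1 / 2) * ∑ i : Fin d, s t i * (w (t + 1) i - w t i) ^ 2
          ≤ η * ⟪g t, u⟫ + (1 / 2) * ∑ i : Fin d, s t i * (u i - w t i) ^ 2)
    (wstar : EuclideanSpace ℝ (Fin d)) (hwstar : wstar ∈ χ) :
    ∑ t ∈ Finset.range T, (f t (w t) - f t wstar)
      ≤ Real.sqrt 2 * Dinf *
          ∑ i : Fin d, Real.sqrt (∑ t ∈ Finset.range T, (g t i) ^ 2) := by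
  have hmem : ∀ n ≤ T, w n ∈ χ := by
    intro n hn
    cases n with
    | zero => exact hw1
    | succ n => exact (hupdate n (Finset.mem_range.2 (by omega))).1
  by_cases hDp : 0 < Dinf
  · have hηp : 0 < η := by rw [hη]; positivity
    have hs2 : Real.sqrt 2 ^ 2 = 2 := Real.sq_sqrt (by norm_num)
    have hη2 : η ^ 2 = Dinf ^ 2 / 2 := by rw [hη, div_pow, hs2]
    have hDη : Dinf = Real.sqrt 2 * η := by rw [hη]; field_simp
    have hstep : ∀ t ∈ Finset.range T, η * (f t (w t) - f t wstar) ≤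
        ∑ i, (s t i / 2 * ((wstar i - w t i) ^ 2 - (wstar i - w (t + 1) i) ^ 2)
          + η ^ 2 * (g t i ^ 2 / (2 * s t i))) := by
      intro t ht
      refine le_trans (mul_le_mul_of_nonneg_left (aux_grad (f t) (hfconv t) (hfdiff t) (w t) wstar)
        hηp.le) ?_
      rw [← hg t]
      exact aux_step χ hconv (s t) (hspos t ht) η (g t) (w t) (w (t + 1)) wstar
        (hupdate t ht).1 hwstar (hupdate t ht).2
    have hsum := Finset.sum_le_sum hstep
    rw [Finset.sum_comm, ← Finset.mul_sum] at hsum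
    have hb : ∀ i ∈ (Finset.univ : Finset (Fin d)), ∑ t ∈ Finset.range T,
        (s t i / 2 * ((wstar i - w t i) ^ 2 - (wstar i - w (t + 1) i) ^ 2)
          + η ^ 2 * (g t i ^ 2 / (2 * s t i))) ≤
        Dinf ^ 2 * Real.sqrt (∑ t ∈ Finset.range T, (g t i) ^ 2) := by
      intro i _
      have h := aux_tel T (fun t => g t i) (fun t => w t i) Dinf η (wstar i)
        (fun n hn => hD _ hwstar _ (hmem n hn) i)
        (fun n hn => by rw [← hs]; exact hspos n (Finset.mem_range.2 hn) i) T le_rfl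
      simp only [← hs] at h
      refine h.trans ?_
      rw [hη2]
      nlinarith [mul_nonneg (Real.sqrt_nonneg (∑ t ∈ Finset.range T, (g t i) ^ 2))
        (sq_nonneg (wstar i - w T i))]
    have hfin := hsum.trans (Finset.sum_le_sum hb)
    rw [← Finset.mul_sum] at hfin
    refine le_of_mul_le_mul_left (hfin.trans (le_of_eq ?_)) hηp
    have : Dinf ^ 2 = η * (Real.sqrt 2 * Dinf) := by
      rw [hDη]; ring
    rw [this]; ring
  · have heq : ∀ t ∈ Finset.range T, f t (w t) - f t wstar = 0 := by
      intro t ht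
      have : w t = wstar := by
        ext i
        have h := hD _ (hmem t (Finset.mem_range.1 ht).le) _ hwstar i
        have h3 := abs_nonneg (w t i - wstar i)
        have h4 : |w t i - wstar i| = 0 := by linarith
        exact sub_eq_zero.1 (abs_eq_zero.1 h4)
      rw [this, sub_self]
    rw [Finset.sum_eq_zero heq]
    rcases Nat.eq_zero_or_pos d with h | h
    · subst h
      simp
    · have h1 := hD _ hwstar _ hwstar ⟨0, h⟩
      have h2 : 0 ≤ Dinf := (abs_nonneg _).trans h1
      positivity
end

section
/- Under the setting of the coordinatewise gradient bound — λ > 0, a sequence (x_t, y_t) with ‖x_t‖₂ ≤ 1 and y_t ∈ {−1,+1}, iterates w_t with ‖w_t‖₂ ≤ 1/√λ, and g_t = ∇L_t(w_t) the gradient of the per-round loss L_t(w) = (λ/2)‖w‖₂² + (1/(2N_t)) Σ_{j<t, y_j≠y_t} (1 − y_t (x_t − x_j)·w)² when N_t = |{j<t : y_j ≠ y_t}| > 0 and L_t = 0 (so g_t = 0) when N_t = 0 — it holds that Σ_{i=1}^d ‖g_{1:T,i}‖₂ ≤ √2 · Σ_{i=1}^d sqrt( Σ_{t=1}^T [ (λ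 w_{t,i})² + C (r_{t,i})² ] ), where C = (1 + 2/√λ)² and r_{t,i} = max_{j<t, y_j ≠ y_t} |x_{j,i} − x_{t,i}| (r_{t,i} = 0 if N_t = 0). -/
open Finset
open scoped RealInnerProductSpace

lemma auc_hasGradientAt {d : ℕ} (lam k s : ℝ) (S : Finset ℕ)
    (a : ℕ → EuclideanSpace ℝ (Fin d)) (v : EuclideanSpace ℝ (Fin d)) :
    HasGradientAt (fun v => lam / 2 * ‖v‖ ^ 2 + k * ∑ i ∈ S, (1 - s * ⟪a i, v⟫) ^ 2)
      (lam • v + k • ∑ i ∈ S, (2 * (1 - s * ⟪a i, v⟫) * (-s)) • a i) v := by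
  rw [hasGradientAt_iff_hasFDerivAt]
  have h1 := ((hasStrictFDerivAt_norm_sq v).hasFDerivAt).const_mul (lam / 2)
  have h2 : ∀ i ∈ S, HasFDerivAt (fun v : EuclideanSpace ℝ (Fin d) => (1 - s * ⟪a i, v⟫) ^ 2)
      ((2 * (1 - s * ⟪a i, v⟫) * (-s)) • innerSL ℝ (a i)) v := by
    intro i _
    have h := ((((innerSL ℝ (a i)).hasFDerivAt (x := v)).const_mul s).const_sub 1).pow 2
    refine h.congr_fderiv ?_
    ext u
    simp
    ring
  have h3 := h1.add ((HasFDerivAt.fun_sum h2).const_mul k)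
  refine h3.congr_fderiv ?_
  ext u
  simp
  ring

lemma auc_coord_bound {d : ℕ} (lam B s n R : ℝ) (S : Finset ℕ) (hn : n = S.card) (hS : 0 < S.card)
    (a : ℕ → EuclideanSpace ℝ (Fin d)) (v : EuclideanSpace ℝ (Fin d)) (i : Fin d)
    (hs : |s| = 1) (hB0 : 0 ≤ B) (hB : ∀ j ∈ S, |1 - s * ⟪a j, v⟫| ≤ B)
    (hR : ∀ j ∈ S, |a j i| ≤ R) :
    ((lam • v + (1 / (2 * n)) • ∑ j ∈ S, (2 * (1 - s * ⟪a j, v⟫) * (-s)) • a j) i) ^ 2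
      ≤ 2 * ((lam * v i) ^ 2 + B ^ 2 * R ^ 2) := by
  have hn0 : 0 < n := by rw [hn]; exact_mod_cast hS
  have e : (lam • v + (1 / (2 * n)) • ∑ j ∈ S, (2 * (1 - s * ⟪a j, v⟫) * (-s)) • a j) i
      = lam * v i + (1 / (2 * n)) * ∑ j ∈ S, (2 * (1 - s * ⟪a j, v⟫) * (-s)) * a j i := by
    simp
  rw [e]
  set z := ∑ j ∈ S, (2 * (1 - s * ⟪a j, v⟫) * (-s)) * a j i with hz
  have h1 : |z| ≤ n * (2 * (B * R)) := by
    calc |z| ≤ ∑ j ∈ S, |(2 * (1 - s * ⟪a j, v⟫) * (-s)) * a j i| := abs_sum_le_sum_abs _ _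
      _ ≤ ∑ j ∈ S, 2 * (B * R) := by
        apply sum_le_sum
        intro j hj
        rw [abs_mul, abs_mul, abs_mul, abs_neg, hs, mul_one, abs_two, mul_assoc]
        have := mul_le_mul (hB j hj) (hR j hj) (abs_nonneg _) hB0
        linarith
      _ = n * (2 * (B * R)) := by rw [sum_const, nsmul_eq_mul, hn]
  have h2 : |1 / (2 * n) * z| ≤ B * R := by
    rw [abs_mul, abs_of_pos (by positivity)]
    calc 1 / (2 * n) * |z| ≤ 1 / (2 * n) * (n * (2 * (B * R))) := by gcongr
      _ = B * R := by field_simp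
  have h3 : (1 / (2 * n) * z) ^ 2 ≤ (B * R) ^ 2 := sq_le_sq' (abs_le.1 h2).1 (abs_le.1 h2).2
  nlinarith [sq_nonneg (lam * v i - 1 / (2 * n) * z)]

/-- Data-dependent bound on the sum of coordinatewise gradient norms from the proof of
Theorem 1 of the paper: with `‖x t‖₂ ≤ 1`, labels `y t ∈ {−1,+1}`, iterates with
`‖w t‖₂ ≤ 1/√λ`, and `g t = ∇ L t (w t)` for the per-round AUC losses `L t`
(which vanish when `N t = 0`),
`∑_i ‖g_{1:T,i}‖₂ ≤ √2 ∑_i sqrt (∑_{t<T} ((λ w_{t,i})² + C r_{t,i}²))`,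
where `C = (1 + 2/√λ)²` and `r t i = max_{j<t, y j ≠ y t} |x_{j,i} - x_{t,i}|`
(`0` when `N t = 0`). -/
theorem auc_gradient_norm_sum_bound (d T : ℕ) (lam : ℝ) (hlam : 0 < lam)
    (x : ℕ → EuclideanSpace ℝ (Fin d)) (hx : ∀ t, ‖x t‖ ≤ 1)
    (y : ℕ → ℝ) (hy : ∀ t, y t = 1 ∨ y t = -1)
    (N : ℕ → ℕ)
    (hN : ∀ t, N t = ((Finset.range t).filter (fun i => y i ≠ y t)).card)
    (L : ℕ → EuclideanSpace ℝ (Fin d) → ℝ)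
    (hL : ∀ t v, L t v =
      if 0 < N t then
        lam / 2 * ‖v‖ ^ 2 +
          (1 / (2 * (N t : ℝ))) *
            ∑ i ∈ (Finset.range t).filter (fun i => y i ≠ y t),
              (1 - y t * ⟪x t - x i, v⟫) ^ 2
      else 0)
    (w : ℕ → EuclideanSpace ℝ (Fin d)) (hw : ∀ t, ‖w t‖ ≤ 1 / Real.sqrt lam)
    (g : ℕ → EuclideanSpace ℝ (Fin d))
    (hg : ∀ t, g t = gradient (L t) (w t))
    (C : ℝ) (hC : C = (1 + 2 / Real.sqrt lam) ^ 2)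
    (r : ℕ → Fin d → ℝ)
    (hr : ∀ t i, r t i =
      ((Finset.range t).filter (fun j => y j ≠ y t)).fold max 0
        (fun j => |x j i - x t i|)) :
    ∑ i : Fin d, Real.sqrt (∑ t ∈ Finset.range T, (g t i) ^ 2)
      ≤ Real.sqrt 2 *
          ∑ i : Fin d,
            Real.sqrt (∑ t ∈ Finset.range T, ((lam * w t i) ^ 2 + C * (r t i) ^ 2)) := by
  have key : ∀ t i, (g t i) ^ 2 ≤ 2 * ((lam * w t i) ^ 2 + C * (r t i) ^ 2) := by
    intro t i
    have hsq : 0 < Real.sqrt lam := Real.sqrt_pos.2 hlam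
    by_cases h : 0 < N t
    · have hLt : L t = fun v => lam / 2 * ‖v‖ ^ 2 +
          (1 / (2 * (N t : ℝ))) *
            ∑ i ∈ (Finset.range t).filter (fun i => y i ≠ y t),
              (1 - y t * ⟪x t - x i, v⟫) ^ 2 := by
        funext v
        rw [hL, if_pos h]
      have hgt := hg t
      rw [hLt, (auc_hasGradientAt lam _ (y t) _ (fun j => x t - x j) (w t)).gradient] at hgt
      rw [hgt, hC]
      have hs : |y t| = 1 := by rcases hy t with h | h <;> simp [h]
      refine auc_coord_bound lam _ (y t) _ _ _ (by rw [hN t]) (by rw [← hN t]; exact h)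
        (fun j => x t - x j) (w t) i hs (by positivity) ?_ ?_
      · intro j _
        have h1 : |⟪x t - x j, w t⟫| ≤ 2 * (1 / Real.sqrt lam) := by
          refine (abs_real_inner_le_norm _ _).trans ?_
          refine mul_le_mul ?_ (hw t) (norm_nonneg _) (by norm_num)
          have := norm_sub_le (x t) (x j)
          linarith [hx t, hx j]
        calc |1 - y t * ⟪x t - x j, w t⟫| ≤ |1| + |y t * ⟪x t - x j, w t⟫| := abs_sub _ _
          _ = 1 + |⟪x t - x j, w t⟫| := by rw [abs_mul, hs, abs_one, one_mul]
          _ ≤ 1 + 2 / Real.sqrt lam := by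
            have : 2 * (1 / Real.sqrt lam) = 2 / Real.sqrt lam := by ring
            linarith
      · intro j hj
        rw [hr, Finset.le_fold_max]
        right
        exact ⟨j, hj, by simp [abs_sub_comm]⟩
    · have hLt : L t = fun _ => 0 := by
        funext v
        rw [hL, if_neg h]
      have hgt : g t = 0 := by rw [hg t, hLt]; exact gradient_const _ _
      have hC0 : 0 ≤ C := by rw [hC]; positivity
      rw [hgt]
      rw [PiLp.zero_apply, zero_pow two_ne_zero]
      positivity
  rw [Finset.mul_sum]
  apply Finset.sum_le_sum
  intro i _
  rw [← Real.sqrt_mul (by norm_num)]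
  apply Real.sqrt_le_sqrt
  rw [Finset.mul_sum]
  exact Finset.sum_le_sum fun t _ => key t i
end
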